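/- Let γ > 1 and B, S > 0 be real constants. For every t with 0 ≤ t < 𝔱_c there exists a unique ρ in the subsonic density range (ϱ_c, ϱ_m] such that 𝔱(ρ) = t. (Consequently the subsonic density, and hence its reciprocal g := 1/ρ, is a well-defined function of t on [0, 𝔱_c), with 1/ϱ_m ≤ g < 1/ϱ_c.) -/

import Mathlib

/-!
On the subsonic range the derivative `2ρ(2B - (γ+1)Sρ^(γ-1))` of the squared momentum is negative,
since its second factor decreases and vanishes at `ϱ_c`. The squared momentum therefore falls
strictly and continuously from its value `𝔱_c` at `ϱ_c` to `0` at `ϱ_m`.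
-/

open Set

/-- The squared momentum `𝔱(ρ)` of a flow of density `ρ`, where `γ` is the adiabatic exponent, `B`
the Bernoulli constant and `S` the entropy constant. -/
noncomputable def squaredMomentum (γ B S ρ : ℝ) : ℝ :=
  2 * ρ ^ 2 * (B - ρ ^ (γ - 1) * S)

/-- The critical density `ϱ_c`, the open lower end of the subsonic range. -/
noncomputable def criticalDensity (γ B S : ℝ) : ℝ :=
  (2 * B / ((γ + 1) * S)) ^ (1 / (γ - 1))

/-- The maximum density `ϱ_m`, the closed upper end of the subsonic range. -/
noncomputable def maxDensity (γ B S : ℝ) : ℝ :=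
  (B / S) ^ (1 / (γ - 1))

/-- The squared critical momentum `𝔱_c`, the supremum of the squared momentum over the subsonic
range. -/
noncomputable def criticalSquaredMomentum (γ B S : ℝ) : ℝ :=
  (γ - 1) * (2 * B / (γ + 1)) ^ ((γ + 1) / (γ - 1)) * S ^ (-2 / (γ - 1))

section

variable {γ B S : ℝ}

theorem criticalDensity_nonneg (hγ : -1 ≤ γ) (hB : 0 ≤ B) (hS : 0 ≤ S) :
    0 ≤ criticalDensity γ B S := by
  have : 0 ≤ γ + 1 := by linarith
  unfold criticalDensity
  positivity

theorem criticalDensity_rpow (hγ : 1 < γ) (hB : 0 ≤ B) (hS : 0 ≤ S) :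
    criticalDensity γ B S ^ (γ - 1) = 2 * B / ((γ + 1) * S) := by
  rw [criticalDensity, one_div, Real.rpow_inv_rpow (by positivity) (sub_pos.2 hγ).ne']

theorem maxDensity_rpow (hγ : γ ≠ 1) (h : 0 ≤ B / S) : maxDensity γ B S ^ (γ - 1) = B / S := by
  rw [maxDensity, one_div, Real.rpow_inv_rpow h (sub_ne_zero.2 hγ)]

theorem criticalDensity_lt_maxDensity (hγ : 1 < γ) (hB : 0 < B) (hS : 0 < S) :
    criticalDensity γ B S < maxDensity γ B S := by
  have hbase : 2 * B / ((γ + 1) * S) < B / S := by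
    rw [mul_div_mul_comm]
    exact mul_lt_of_lt_one_left (by positivity) ((div_lt_one (by linarith)).2 (by linarith))
  exact Real.rpow_lt_rpow (by positivity) hbase (one_div_pos.2 (sub_pos.2 hγ))

theorem sq_criticalDensity (hγ : -1 ≤ γ) (hB : 0 ≤ B) (hS : 0 ≤ S) :
    criticalDensity γ B S ^ 2 = (2 * B / (γ + 1)) ^ (2 / (γ - 1)) * S ^ (-2 / (γ - 1)) := by
  have hγ' : 0 ≤ γ + 1 := by linarith
  have hexp : 1 / (γ - 1) * (2 : ℕ) = 2 / (γ - 1) := by push_cast; ring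
  rw [criticalDensity, ← Real.rpow_mul_natCast (by positivity), hexp, ← div_div,
    Real.div_rpow (by positivity) hS, neg_div, Real.rpow_neg hS, div_eq_mul_inv]

theorem squaredMomentum_maxDensity (hγ : γ ≠ 1) (hS : S ≠ 0) (h : 0 ≤ B / S) :
    squaredMomentum γ B S (maxDensity γ B S) = 0 := by
  rw [squaredMomentum, maxDensity_rpow hγ h, div_mul_cancel₀ B hS, sub_self, mul_zero]

theorem squaredMomentum_criticalDensity (hγ : 1 < γ) (hB : 0 ≤ B) (hS : 0 < S) :
    squaredMomentum γ B S (criticalDensity γ B S) = criticalSquaredMomentum γ B S := by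
  have hγ' : 0 < γ - 1 := sub_pos.2 hγ
  have hexp : (γ + 1) / (γ - 1) = 1 + 2 / (γ - 1) := by field_simp; ring
  have hpow : (2 * B / (γ + 1)) ^ ((γ + 1) / (γ - 1)) =
      2 * B / (γ + 1) * (2 * B / (γ + 1)) ^ (2 / (γ - 1)) := by
    rw [hexp, Real.rpow_one_add' (by positivity) (by positivity)]
  rw [squaredMomentum, criticalSquaredMomentum, criticalDensity_rpow hγ hB hS.le,
    sq_criticalDensity (by linarith) hB hS.le, hpow]
  field_simp
  ring

theorem continuous_squaredMomentum (hγ : 1 ≤ γ) : Continuous (squaredMomentum γ B S) := by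
  have : Continuous fun ρ : ℝ ↦ ρ ^ (γ - 1) := Real.continuous_rpow_const (sub_nonneg.2 hγ)
  unfold squaredMomentum
  fun_prop

theorem hasDerivAt_squaredMomentum {ρ : ℝ} (hρ : ρ ≠ 0) :
    HasDerivAt (squaredMomentum γ B S) (2 * ρ * (2 * B - (γ + 1) * S * ρ ^ (γ - 1))) ρ := by
  have hsq : HasDerivAt (fun x : ℝ ↦ 2 * x ^ 2) (2 * (2 * ρ)) ρ := by
    simpa using (hasDerivAt_pow 2 ρ).const_mul 2
  have hpow : HasDerivAt (fun x : ℝ ↦ x ^ (γ - 1)) ((γ - 1) * ρ ^ (γ - 1 - 1)) ρ :=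
    Real.hasDerivAt_rpow_const (Or.inl hρ)
  refine (hsq.mul ((hpow.mul_const S).const_sub B)).congr_deriv ?_
  rw [Real.rpow_sub_one hρ (γ - 1)]
  field_simp
  ring

theorem strictAntiOn_squaredMomentum (hγ : 1 < γ) (hB : 0 ≤ B) (hS : 0 < S) :
    StrictAntiOn (squaredMomentum γ B S) (Ici (criticalDensity γ B S)) := by
  refine strictAntiOn_of_deriv_neg (convex_Ici _) (continuous_squaredMomentum hγ.le).continuousOn
    fun ρ hρ ↦ ?_
  rw [interior_Ici, mem_Ioi] at hρ
  have hc : 0 ≤ criticalDensity γ B S := criticalDensity_nonneg (by linarith) hB hS.le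
  have hρ_pos : 0 < ρ := hc.trans_lt hρ
  have hrpow : 2 * B / ((γ + 1) * S) < ρ ^ (γ - 1) :=
    criticalDensity_rpow hγ hB hS.le ▸ Real.rpow_lt_rpow hc hρ (sub_pos.2 hγ)
  rw [(hasDerivAt_squaredMomentum hρ_pos.ne').deriv]
  exact mul_neg_of_pos_of_neg (by positivity) (sub_neg.2 ((div_lt_iff₀' (by positivity)).1 hrpow))

theorem bijOn_squaredMomentum (hγ : 1 < γ) (hB : 0 < B) (hS : 0 < S) :
    BijOn (squaredMomentum γ B S) (Ioc (criticalDensity γ B S) (maxDensity γ B S))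
      (Ico 0 (criticalSquaredMomentum γ B S)) := by
  have hanti : StrictAntiOn (squaredMomentum γ B S)
      (Icc (criticalDensity γ B S) (maxDensity γ B S)) :=
    (strictAntiOn_squaredMomentum hγ hB.le hS).mono Icc_subset_Ici_self
  have himage := (continuous_squaredMomentum hγ.le).continuousOn.image_Ioc_of_strictAntiOn
    (criticalDensity_lt_maxDensity hγ hB hS).le hanti
  rw [squaredMomentum_maxDensity hγ.ne' hS.ne' (div_pos hB hS).le,
    squaredMomentum_criticalDensity hγ hB.le hS] at himage
  exact himage ▸ (hanti.injOn.mono Ioc_subset_Icc_self).bijOn_image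

end

/-- Let `γ > 1` and `B, S > 0`. For every `t` with `0 ≤ t < 𝔱_c` there exists a unique
density `ρ` in the subsonic range `(ϱ_c, ϱ_m]` such that the squared momentum
`2ρ²(B - ρ^(γ-1)S)` equals `t`. -/
theorem stmt_3 (γ B S t : ℝ) (hγ : 1 < γ) (hB : 0 < B) (hS : 0 < S)
    (ht0 : 0 ≤ t)
    (htc : t < (γ - 1) * (2 * B / (γ + 1)) ^ ((γ + 1) / (γ - 1)) * S ^ (-2 / (γ - 1))) :
    ∃! ρ : ℝ, ((2 * B / ((γ + 1) * S)) ^ (1 / (γ - 1)) < ρ ∧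
        ρ ≤ (B / S) ^ (1 / (γ - 1))) ∧
      2 * ρ ^ 2 * (B - ρ ^ (γ - 1) * S) = t := by
  obtain ⟨-, hinj, hsurj⟩ := bijOn_squaredMomentum hγ hB hS
  obtain ⟨ρ, hρ, hρt⟩ := hsurj ⟨ht0, htc⟩
  exact ⟨ρ, ⟨hρ, hρt⟩, fun σ ⟨hσ, hσt⟩ ↦ hinj hσ hρ (hσt.trans hρt.symm)⟩
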